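/- Let (V, w, d) be a finite weighted metric space, k ≥ 1 an integer with k ≤ |V|, and let OPT_k(V) := min over S* ⊆ V with |S*| = k of cost(S*), where cost(S) = ∑_{x∈V} w(x)·min_{y∈S} d(x,y). Then for every subset S ⊆ V with |S| = i > k, min_{y ∈ S} cost(S − y) − cost(S) ≤ (2/(i − k)) · OPT_k(V). -/

import Mathlib

/-!
Let `T` be any `k`-element set of centers. Send each center of `T` to a nearest center in `S`, and
let `R` be the centers of `S` not hit, so `|R| ≥ i - k`. If `y ∈ R` is removed from `S`, a point
`x` served by `y` can be rerouted through its nearest center `t ∈ T` to the center of `S` nearest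
to `t`, which is still present; two triangle inequalities bound the extra distance by `2 d(x, T)`
(`distToSet_erase_le`). Different centers serve disjoint sets of points, so the increases summed
over `R` are at most `2 cost(T)` (`card_sub_mul_le`), and the cheapest removal costs at most the
average.
-/

open Finset

/-- Distance from a point to a (nonempty) finite set: `min_{y ∈ S} d(x,y)`. -/
noncomputable def distToSet {V : Type*} [MetricSpace V] (x : V) (S : Finset V) : ℝ :=
  sInf ((fun y => dist x y) '' ↑S)

/-- `k`-median cost of a center set `S` with respect to the point set `U`:
`∑_{x ∈ U} w(x) · d(x, S)`. -/
noncomputable def kCost {V : Type*} [MetricSpace V] (w : V → NNReal) (S U : Finset V) : ℝ :=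
  ∑ x ∈ U, (w x : ℝ) * distToSet x S

/-- `OPT_k(U, X)`: minimum over `S ⊆ X` with `|S| = k` of `kCost w S U`. -/
noncomputable def kOPT {V : Type*} [MetricSpace V] (w : V → NNReal) (k : ℕ) (U X : Finset V) : ℝ :=
  sInf {c : ℝ | ∃ S : Finset V, S ⊆ X ∧ S.card = k ∧ c = kCost w S U}

theorem exists_nearest {V : Type*} [MetricSpace V] {S : Finset V} (hS : S.Nonempty) (x : V) :
    ∃ y ∈ S, dist x y = distToSet x S := by
  have h := (hS.to_set.image (fun y => dist x y)).csInf_mem (S.finite_toSet.image _)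
  obtain ⟨y, hy, h⟩ := h
  exact ⟨y, by simpa using hy, h⟩

theorem distToSet_le {V : Type*} [MetricSpace V] {S : Finset V} {x y : V} (hy : y ∈ S) :
    distToSet x S ≤ dist x y :=
  csInf_le (S.finite_toSet.image _).bddBelow ⟨y, hy, rfl⟩

theorem distToSet_nonneg {V : Type*} [MetricSpace V] (S : Finset V) (x : V) :
    0 ≤ distToSet x S :=
  Real.sInf_nonneg (by rintro _ ⟨y, -, rfl⟩; exact dist_nonneg)

theorem kCost_nonneg {V : Type*} [MetricSpace V] (w : V → NNReal) (S U : Finset V) :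
    0 ≤ kCost w S U :=
  Finset.sum_nonneg fun x _ => mul_nonneg (w x).2 (distToSet_nonneg S x)

/-- Rerouting bound: `σ` is a nearest-center map to `S`, and `y` is a center that is not the chosen
nearest center `σ t` of any `t ∈ T`. Removing `y` affects only the points served by `y`, each by at
most twice its distance to `T`. -/
theorem distToSet_erase_le {V : Type*} [MetricSpace V] [DecidableEq V] {S T : Finset V}
    (hT : T.Nonempty) {σ : V → V} (hσ : ∀ x, σ x ∈ S) (hσd : ∀ x, dist x (σ x) = distToSet x S)
    {y : V} (hy : y ∉ T.image σ) (x : V) :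
    distToSet x (S.erase y) ≤ distToSet x S + if σ x = y then 2 * distToSet x T else 0 := by
  split_ifs with h
  · obtain ⟨t, ht, htd⟩ := exists_nearest hT x
    have hne : σ t ≠ y := fun e => hy (e ▸ Finset.mem_image_of_mem σ ht)
    have h1 : distToSet x (S.erase y) ≤ dist x (σ t) :=
      distToSet_le (Finset.mem_erase.2 ⟨hne, hσ t⟩)
    have h2 : dist t (σ t) ≤ dist t (σ x) := by
      rw [hσd t]; exact distToSet_le (hσ x)
    have h3 := dist_triangle x t (σ t)
    have h4 := dist_triangle t x (σ x)
    rw [dist_comm t x] at h4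
    linarith [hσd x]
  · rw [add_zero, ← hσd x]
    exact distToSet_le (Finset.mem_erase.2 ⟨h, hσ x⟩)

/-- Averaging over the removable centers, with `m` any nonnegative lower bound on the increase in
cost caused by a single removal. -/
theorem card_sub_mul_le {V : Type*} [Fintype V] [MetricSpace V] [DecidableEq V]
    (w : V → NNReal) {S T : Finset V} (hS : S.Nonempty) (hT : T.Nonempty) {m : ℝ} (hm : 0 ≤ m)
    (hmin : ∀ y ∈ S, m ≤ kCost w (S.erase y) Finset.univ - kCost w S Finset.univ) :
    ((S.card : ℝ) - T.card) * m ≤ 2 * kCost w T Finset.univ := by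
  choose σ hσ hσd using exists_nearest hS
  set R := S \ T.image σ with hR
  have hcard : (S.card : ℝ) - T.card ≤ R.card := by
    have h1 : S.card - (T.image σ).card ≤ R.card := Finset.le_card_sdiff (T.image σ) S
    have h2 : (T.image σ).card ≤ T.card := Finset.card_image_le
    have h3 : S.card ≤ R.card + T.card := by omega
    have h4 : (S.card : ℝ) ≤ R.card + T.card := by exact_mod_cast h3
    linarith
  have hinc : ∀ y ∈ R, m ≤ ∑ x, if σ x = y then (w x : ℝ) * (2 * distToSet x T) else 0 := by
    intro y hy
    rw [hR, Finset.mem_sdiff] at hy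
    refine (hmin y hy.1).trans ?_
    rw [kCost, kCost, ← Finset.sum_sub_distrib]
    refine Finset.sum_le_sum fun x _ => ?_
    have h := mul_le_mul_of_nonneg_left (distToSet_erase_le hT hσ hσd hy.2 x) (w x).2
    rw [mul_add, mul_ite, mul_zero] at h
    exact sub_le_iff_le_add'.2 h
  calc ((S.card : ℝ) - T.card) * m ≤ R.card * m := mul_le_mul_of_nonneg_right hcard hm
    _ = ∑ y ∈ R, m := by simp
    _ ≤ ∑ y ∈ R, ∑ x, if σ x = y then (w x : ℝ) * (2 * distToSet x T) else 0 :=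
        Finset.sum_le_sum hinc
    _ = ∑ x, ∑ y ∈ R, if σ x = y then (w x : ℝ) * (2 * distToSet x T) else 0 := Finset.sum_comm
    _ ≤ ∑ x, (w x : ℝ) * (2 * distToSet x T) := by
        refine Finset.sum_le_sum fun x _ => ?_
        have h0 : 0 ≤ (w x : ℝ) * (2 * distToSet x T) :=
          mul_nonneg (w x).2 (mul_nonneg zero_le_two (distToSet_nonneg T x))
        rw [Finset.sum_ite_eq]
        split_ifs
        · exact le_rfl
        · exact h0
    _ = 2 * kCost w T Finset.univ := by
        rw [kCost, Finset.mul_sum]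
        exact Finset.sum_congr rfl fun x _ => by ring

/-- For `|S| = i > k`, `min_{y ∈ S} cost(S − y) − cost(S) ≤ (2/(i − k)) · OPT_k(V)`. -/
theorem min_removal_increase_le {V : Type*} [Fintype V] [MetricSpace V] [DecidableEq V]
    (w : V → NNReal) (k i : ℕ) (hk : 1 ≤ k) (hkV : k ≤ Fintype.card V)
    (S : Finset V) (hS : S.Nonempty) (hScard : S.card = i) (hik : k < i) :
    S.inf' hS (fun y => kCost w (S.erase y) Finset.univ) - kCost w S Finset.univ ≤
      (2 / ((i : ℝ) - k)) * kOPT w k Finset.univ Finset.univ := by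
  have hpos : (0 : ℝ) < (i : ℝ) - k := sub_pos.2 (by exact_mod_cast hik)
  set m := S.inf' hS (fun y => kCost w (S.erase y) Finset.univ) - kCost w S Finset.univ with hm
  have hmin : ∀ y ∈ S, m ≤ kCost w (S.erase y) Finset.univ - kCost w S Finset.univ := fun y hy =>
    sub_le_sub_right (Finset.inf'_le (fun y => kCost w (S.erase y) Finset.univ) hy) _
  have key : ((i : ℝ) - k) * m / 2 ≤ kOPT w k Finset.univ Finset.univ := by
    apply le_csInf
    · obtain ⟨T, hT, hTc⟩ := Finset.exists_subset_card_eq (s := (Finset.univ : Finset V)) hkV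
      exact ⟨_, T, hT, hTc, rfl⟩
    · rintro _ ⟨T, -, hTc, rfl⟩
      have hTne : T.Nonempty := Finset.card_pos.1 (by omega)
      rcases le_total 0 m with h0 | h0
      · have h := card_sub_mul_le w hS hTne h0 hmin
        rw [hScard, hTc] at h
        linarith
      · have h := mul_nonpos_of_nonneg_of_nonpos hpos.le h0
        linarith [kCost_nonneg w T Finset.univ]
  rw [div_mul_eq_mul_div, le_div_iff₀ hpos]
  linarith
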